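/- arXiv:math/0512580 — 5 statements merged into one kernel-verified Lean document; each statement's English description precedes it below -/
import Mathlib

section
/- For all n ≥ 2, the n-th Trim number satisfies t(n) < n². -/
/-- `p i` is the `i`-th prime number (1-indexed): `p 1 = 2`, `p 2 = 3`, ... -/
noncomputable def p (i : ℕ) : ℕ := Nat.nth Nat.Prime (i - 1)

/-- `aT x i` is the unique residue `r` with `0 ≤ r < p i` and `x + r ≡ 0 (mod p i)`. -/
noncomputable def aT (x i : ℕ) : ℕ := (p i - x % p i) % p i

/-- The Trim increment `d_T(n)`, expressed in terms of `t n = x`: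
`d_T(1) = 1` and, for `n ≥ 2`, `d_T(n)` is the smallest positive even integer `d`
with `d ≠ a_T(n, i)` for every `i` with `1 ≤ i ≤ n - 1`. -/
noncomputable def dTaux (n x : ℕ) : ℕ :=
  if n = 1 then 1
  else sInf {d : ℕ | 0 < d ∧ 2 ∣ d ∧ ∀ i, 1 ≤ i → i ≤ n - 1 → d ≠ aT x i}

/-- The Trim numbers: `t 1 = 2` and `t (n+1) = t n + d_T n`. -/
noncomputable def t : ℕ → ℕ
  | 0 => 0
  | 1 => 2
  | (n + 2) => t (n + 1) + dTaux (n + 1) (t (n + 1))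

/-- The Trim increment `d_T(n)`. -/
noncomputable def dT (n : ℕ) : ℕ := dTaux n (t n)

/-- Pigeonhole: `n - 1` residues cannot block all of `2, 4, ..., 2n`. -/
theorem dTaux_le (n x : ℕ) (hn : 2 ≤ n) : dTaux n x ≤ 2 * n := by
  unfold dTaux
  rw [if_neg (by omega)]
  by_contra hcon
  have key : ∀ j ∈ Finset.Icc 1 n, 2 * j ∈ (Finset.Icc 1 (n - 1)).image (aT x) := by
    intro j hj
    rw [Finset.mem_Icc] at hj
    by_contra hnot
    apply hcon
    refine le_trans (Nat.sInf_le (m := 2 * j) ⟨by omega, ⟨j, rfl⟩, ?_⟩) (by omega)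
    intro i h1 h2 he
    exact hnot (Finset.mem_image.mpr ⟨i, Finset.mem_Icc.mpr ⟨h1, h2⟩, he.symm⟩)
  have h1 : (Finset.Icc 1 n).card ≤ ((Finset.Icc 1 (n - 1)).image (aT x)).card :=
    Finset.card_le_card_of_injOn (fun j => 2 * j) key
      (fun a _ b _ h => by
        have h' : 2 * a = 2 * b := h
        omega)
  have h2 := Finset.card_image_le (s := Finset.Icc 1 (n - 1)) (f := aT x)
  simp only [Nat.card_Icc] at h1 h2
  omega

/-- For all `n ≥ 2`, the `n`-th Trim number satisfies `t n < n²`. -/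
theorem stmt_3 (n : ℕ) (hn : 2 ≤ n) : t n < n ^ 2 := by
  induction n, hn using Nat.le_induction with
  | base => simp [t, dTaux]
  | succ m hm ih =>
    obtain ⟨k, rfl⟩ : ∃ k, m = k + 1 := ⟨m - 1, by omega⟩
    have h := dTaux_le (k + 1) (t (k + 1)) hm
    have e : t (k + 1 + 1) = t (k + 1) + dTaux (k + 1) (t (k + 1)) := by rw [t]
    rw [e]
    nlinarith
end

section
/- For all n ≥ 2, if the Trim number t(n+1) is not prime, then its least prime factor is strictly less than d_T(n) = t(n+1) − t(n). -/
theorem dTaux_spec (n x : ℕ) (hn : 2 ≤ n) :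
    (0 < dTaux n x ∧ 2 ∣ dTaux n x ∧ ∀ i, 1 ≤ i → i ≤ n - 1 → dTaux n x ≠ aT x i) ∧
      dTaux n x ≤ 2 * n := by
  have hex : ∃ k ∈ Finset.Icc 1 n, ∀ i, 1 ≤ i → i ≤ n - 1 → 2 * k ≠ aT x i := by
    by_contra hcon
    push Not at hcon
    have hsub : (Finset.Icc 1 n).image (fun k => 2 * k) ⊆ (Finset.Icc 1 (n - 1)).image (aT x) := by
      intro y hy
      obtain ⟨k, hk, rfl⟩ := Finset.mem_image.1 hy
      obtain ⟨i, h1, h2, h3⟩ := hcon k hk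
      exact Finset.mem_image.2 ⟨i, Finset.mem_Icc.2 ⟨h1, h2⟩, h3.symm⟩
    have hc := Finset.card_le_card hsub
    rw [Finset.card_image_of_injective _ (fun a b h => by simpa using h)] at hc
    have hc2 := hc.trans Finset.card_image_le
    simp at hc2
    omega
  obtain ⟨k, hk, hk2⟩ := hex
  rw [Finset.mem_Icc] at hk
  have hmem : 2 * k ∈ {d : ℕ | 0 < d ∧ 2 ∣ d ∧ ∀ i, 1 ≤ i → i ≤ n - 1 → d ≠ aT x i} :=
    ⟨by omega, ⟨k, rfl⟩, hk2⟩
  have hd : dTaux n x = sInf {d : ℕ | 0 < d ∧ 2 ∣ d ∧ ∀ i, 1 ≤ i → i ≤ n - 1 → d ≠ aT x i} := by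
    unfold dTaux
    rw [if_neg (by omega)]
  rw [hd]
  exact ⟨Nat.sInf_mem ⟨_, hmem⟩, (Nat.sInf_le hmem).trans (by omega)⟩

theorem t_step (n : ℕ) (hn : 1 ≤ n) : t (n + 1) = t n + dT n := by
  obtain ⟨m, rfl⟩ := Nat.exists_eq_add_of_le' hn
  rfl

theorem t_inv (n : ℕ) : t (n + 2) % 2 = 1 ∧ 1 < t (n + 2) ∧
    t (n + 2) ≤ (n + 1) ^ 2 + (n + 1) + 1 := by
  induction n with
  | zero => simp [t, dTaux]
  | succ k ih =>
    have h := dTaux_spec (k + 2) (t (k + 2)) (by omega)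
    have hs : t (k + 1 + 2) = t (k + 2) + dTaux (k + 2) (t (k + 2)) := t_step (k + 2) (by omega)
    obtain ⟨⟨h1, h2, -⟩, h3⟩ := h
    refine ⟨by omega, by omega, ?_⟩
    rw [hs]
    nlinarith [ih.2.2]

/-- For all `n ≥ 2`, if the Trim number `t (n+1)` is not prime, then its least
prime factor is strictly less than `d_T(n) = t (n+1) - t n`. -/
theorem stmt_6 (n : ℕ) (hn : 2 ≤ n) (h : ¬ (t (n + 1)).Prime) :
    (t (n + 1)).minFac < dT n := by
  have hs := t_step n (by omega)
  obtain ⟨⟨h1, h2, h3⟩, -⟩ := dTaux_spec n (t n) hn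
  change 0 < dT n at h1
  change 2 ∣ dT n at h2
  change ∀ i, 1 ≤ i → i ≤ n - 1 → dT n ≠ aT (t n) i at h3
  obtain ⟨m, rfl⟩ := Nat.exists_eq_add_of_le' (show 1 ≤ n by omega)
  obtain ⟨i1, i2, i3⟩ := t_inv m
  change t (m + 1 + 1) % 2 = 1 at i1
  change 1 < t (m + 1 + 1) at i2
  change t (m + 1 + 1) ≤ _ at i3
  by_contra hcon
  push Not at hcon
  have hq : (t (m + 1 + 1)).minFac.Prime := Nat.minFac_prime (by omega)
  have hdvd := Nat.minFac_dvd (t (m + 1 + 1))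
  have hsq := Nat.minFac_sq_le_self (by omega) h
  generalize (t (m + 1 + 1)).minFac = q at *
  have hne : q ≠ dT (m + 1) := by
    intro he
    have : 2 ∣ t (m + 1 + 1) := (he ▸ h2).trans hdvd
    omega
  have hlt : dT (m + 1) < q := by omega
  have hnth : Nat.nth Nat.Prime (Nat.count Nat.Prime q) = q := Nat.nth_count hq
  have hp : p (Nat.count Nat.Prime q + 1) = q := by simpa [p] using hnth
  have hge := Nat.add_two_le_nth_prime (Nat.count Nat.Prime q)
  rw [hnth] at hge
  by_cases hi : Nat.count Nat.Prime q + 1 ≤ m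
  · apply h3 _ (by omega) hi
    unfold aT
    rw [hp]
    rw [hs] at hdvd
    have hr := Nat.mod_lt (t (m + 1)) hq.pos
    have hd2 : q ∣ t (m + 1) % q + dT (m + 1) := by
      rw [Nat.dvd_iff_mod_eq_zero] at hdvd ⊢
      rwa [Nat.mod_add_mod]
    obtain ⟨c, hc⟩ := hd2
    have hc1 : c = 1 := by
      have : c ≠ 0 := by rintro rfl; omega
      have : c < 2 := by by_contra h'; nlinarith
      omega
    subst hc1
    rw [show q - t (m + 1) % q = dT (m + 1) by omega, Nat.mod_eq_of_lt hlt]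
  · have : m + 2 ≤ q := by omega
    nlinarith
end

section
/- For every n ≥ 1 there exists an index m such that the Compact number c(m) satisfies n² < c(m) ≤ (n+1)². -/
/-- `aC x i` is the unique residue `r` with `0 ≤ r < p i` and `x + r ≡ 0 (mod p i)`. -/
noncomputable def aC (x i : ℕ) : ℕ := (p i - x % p i) % p i

/-- The Compact increment `d_c(n)`, expressed in terms of `c n = x`:
`d_c(1) = 1` and, for `n ≥ 2`, `d_c(n)` is the smallest positive even integer `d`
with `d ≠ a_c(n, i)` for every `i ≥ 1` with `p i ^ 2 ≤ c n`. -/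
noncomputable def dCaux (n x : ℕ) : ℕ :=
  if n = 1 then 1
  else sInf {d : ℕ | 0 < d ∧ 2 ∣ d ∧ ∀ i, 1 ≤ i → p i ^ 2 ≤ x → d ≠ aC x i}

/-- The Compact numbers: `c 1 = 2` and `c (n+1) = c n + d_c n`. -/
noncomputable def c : ℕ → ℕ
  | 0 => 0
  | 1 => 2
  | (n + 2) => c (n + 1) + dCaux (n + 1) (c (n + 1))

/-- The Compact increment `d_c(n)`. -/
noncomputable def dC (n : ℕ) : ℕ := dCaux n (c n)

theorem exists_small_gap (n x : ℕ) (hn : 1 ≤ n) (hx : x ≤ n ^ 2) :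
    ∃ d ∈ {d : ℕ | 0 < d ∧ 2 ∣ d ∧ ∀ i, 1 ≤ i → p i ^ 2 ≤ x → d ≠ aC x i}, d ≤ 2 * n := by
  by_contra hcon
  push Not at hcon
  have hsub : (Finset.Icc 1 n).image (fun j => 2 * j) ⊆
      (Finset.Icc 2 n).image (fun q => (q - x % q) % q) := by
    intro d hd
    simp only [Finset.mem_image, Finset.mem_Icc] at hd
    obtain ⟨j, hj, rfl⟩ := hd
    by_contra hnot
    have h := hcon (2 * j) ⟨by omega, ⟨j, rfl⟩, by
      intro i _ hi heq
      apply hnot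
      have hp : (p i).Prime := Nat.prime_nth_prime _
      rw [Finset.mem_image]
      refine ⟨p i, Finset.mem_Icc.2 ⟨hp.two_le, ?_⟩, heq.symm⟩
      exact (Nat.pow_le_pow_iff_left (by norm_num)).1 (hi.trans hx)⟩
    omega
  have h1 := Finset.card_le_card hsub
  rw [Finset.card_image_of_injective _ (fun a b h => by simpa using h)] at h1
  have h2 := h1.trans Finset.card_image_le
  simp only [Nat.card_Icc] at h2
  omega

theorem dCaux_bounds (m n x : ℕ) (hn : 1 ≤ n) (hx : x ≤ n ^ 2) :
    0 < dCaux m x ∧ dCaux m x ≤ 2 * n := by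
  unfold dCaux
  split_ifs
  · omega
  · obtain ⟨d, hd, hle⟩ := exists_small_gap n x hn hx
    exact ⟨(Nat.sInf_mem ⟨d, hd⟩).1, (Nat.sInf_le hd).trans hle⟩

theorem c_ge (m : ℕ) : m ≤ c m := by
  induction m with
  | zero => simp
  | succ k ih =>
    cases k with
    | zero => simp [c]
    | succ k =>
      have h := (dCaux_bounds (k + 1) (c (k + 1) + 1) (c (k + 1)) (by omega) (by nlinarith)).1
      rw [c]
      omega

/-- For every `n ≥ 1` there exists an index `m` such that the Compact number
`c m` satisfies `n² < c m ≤ (n+1)²`. -/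
theorem stmt_7 (n : ℕ) (hn : 1 ≤ n) :
    ∃ m : ℕ, n ^ 2 < c m ∧ c m ≤ (n + 1) ^ 2 := by
  classical
  have hex : ∃ m, n ^ 2 < c m := ⟨n ^ 2 + 1, c_ge _⟩
  refine ⟨Nat.find hex, Nat.find_spec hex, ?_⟩
  have hmin := fun k => Nat.find_min hex (m := k)
  generalize Nat.find hex = m at hmin
  match m with
  | 0 => simp [c]
  | 1 => simp only [c]; nlinarith
  | k + 2 =>
    have h := hmin (k + 1) (by omega)
    push Not at h
    have hb := (dCaux_bounds (k + 1) n _ hn h).2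
    rw [c]
    nlinarith
end

section
/- For all n ≥ 2 and all k ≥ 1, if p(k)² < c(n) ≤ p(k+1)², then the Compact increment satisfies d_c(n) ≤ 2k; that is, c(n+1) − c(n) ≤ 2k. -/
theorem p_le_imp (i k : ℕ) (hi : 1 ≤ i) (h : p i ≤ p (k + 1)) : i ≤ k + 1 := by
  unfold p at h
  have := (Nat.nth_le_nth Nat.infinite_setOf_prime).1 h
  omega

/-- For all `n ≥ 2` and `k ≥ 1`, if `p k ^ 2 < c n ≤ p (k+1) ^ 2`, then the
Compact increment satisfies `d_c(n) ≤ 2k`; that is, `c (n+1) - c n ≤ 2k`. -/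
theorem stmt_8 (n k : ℕ) (hn : 2 ≤ n) (hk : 1 ≤ k)
    (h1 : p k ^ 2 < c n) (h2 : c n ≤ p (k + 1) ^ 2) :
    dC n ≤ 2 * k ∧ c (n + 1) - c n ≤ 2 * k := by
  have key : dC n ≤ 2 * k := by
    unfold dC dCaux
    rw [if_neg (by omega)]
    generalize c n = x at *
    have hcard : ((Finset.Icc 2 k).image (aC x)).card < ((Finset.Icc 1 k).image (2 * ·)).card := by
      rw [Finset.card_image_of_injective (Finset.Icc 1 k) (fun a b h => by simpa using h)]
      refine lt_of_le_of_lt Finset.card_image_le ?_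
      simp only [Nat.card_Icc]
      omega
    obtain ⟨d, hd, hd'⟩ := Finset.exists_mem_notMem_of_card_lt_card hcard
    simp only [Finset.mem_image, Finset.mem_Icc, not_exists, not_and] at hd hd'
    obtain ⟨j, hj, rfl⟩ := hd
    refine le_trans (Nat.sInf_le ⟨by omega, ⟨j, rfl⟩, ?_⟩) (by omega : 2 * j ≤ 2 * k)
    intro i hi hix he
    have hik : i ≤ k + 1 := p_le_imp i k hi
      ((Nat.pow_le_pow_iff_left (by norm_num)).1 (hix.trans h2))
    rcases Nat.lt_or_ge i 2 with h | h
    · have : i = 1 := by omega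
      subst this
      have hp : p 1 = 2 := by simp [p]
      unfold aC at he
      rw [hp] at he
      omega
    · rcases Nat.lt_or_ge k i with h' | h'
      · have : i = k + 1 := by omega
        subst this
        have hx : x = p (k + 1) ^ 2 := le_antisymm h2 hix
        have : aC x (k + 1) = 0 := by
          unfold aC
          rw [hx, pow_two, Nat.mul_mod_left, Nat.sub_zero, Nat.mod_self]
        omega
      · exact hd' i ⟨h, h'⟩ he.symm
  refine ⟨key, ?_⟩
  obtain ⟨m, rfl⟩ : ∃ m, n = m + 1 := ⟨n - 1, by omega⟩
  have : c (m + 1 + 1) = c (m + 1) + dC (m + 1) := by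
    rw [c, dC]
  omega
end

section
/- There exist a constant C > 0 and a natural number N such that for all n ≥ N, the Compact increment satisfies d_c(n) ≤ C · √(c(n) / log c(n)), where log denotes the natural logarithm; that is, (c(n+1) − c(n) : ℝ) ≤ C · Real.sqrt (c(n) / Real.log (c(n))). -/
open Nat in
lemma exists_good (x : ℕ) : ∃ d : ℕ, d ≤ 2 * (Nat.primeCounting (Nat.sqrt x) + 1) ∧
    (0 < d ∧ 2 ∣ d ∧ ∀ i, 1 ≤ i → p i ^ 2 ≤ x → d ≠ aC x i) := by
  classical
  let s := (Nat.primesLE (Nat.sqrt x)).image (fun q => (q - x % q) % q)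
  let t := (Finset.range (Nat.primeCounting (Nat.sqrt x) + 1)).image (fun k => 2 * (k + 1))
  have ht : t.card = Nat.primeCounting (Nat.sqrt x) + 1 := by
    rw [Finset.card_image_of_injective _ (fun a b h => by omega),
      Finset.card_range]
  have hs : s.card ≤ Nat.primeCounting (Nat.sqrt x) := by
    rw [← Nat.primesLE_card_eq_primeCounting]
    exact Finset.card_image_le
  obtain ⟨d, hd, hd'⟩ := Finset.exists_mem_notMem_of_card_lt_card (s := s) (t := t) (by omega)
  obtain ⟨k, hk, rfl⟩ := Finset.mem_image.1 hd
  rw [Finset.mem_range] at hk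
  refine ⟨2 * (k + 1), by omega, by omega, ⟨_, rfl⟩, ?_⟩
  intro i _ hi h
  apply hd'
  refine Finset.mem_image.2 ⟨p i, ?_, h.symm⟩
  rw [Nat.mem_primesLE]
  exact ⟨Nat.le_sqrt'.2 hi, Nat.prime_nth_prime _⟩

lemma dCaux_bound (n x : ℕ) :
    0 < dCaux n x ∧ dCaux n x ≤ 2 * (Nat.primeCounting (Nat.sqrt x) + 1) := by
  unfold dCaux
  split_ifs
  · omega
  · obtain ⟨d, h1, h2⟩ := exists_good x
    refine ⟨(Nat.sInf_mem (s := {d : ℕ | 0 < d ∧ 2 ∣ d ∧ ∀ i, 1 ≤ i → p i ^ 2 ≤ x → d ≠ aC x i})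
      ⟨d, h2⟩).1, le_trans (Nat.sInf_le h2) h1⟩

lemma c_succ (n : ℕ) (hn : 1 ≤ n) : c (n + 1) = c n + dCaux n (c n) := by
  obtain ⟨m, rfl⟩ := Nat.exists_eq_add_of_le' hn
  simp only [c]

lemma le_c (n : ℕ) : n ≤ c n := by
  induction n with
  | zero => omega
  | succ n ih =>
    rcases Nat.eq_zero_or_pos n with rfl | h
    · simp [c]
    · rw [c_succ n h]
      have := (dCaux_bound n (c n)).1
      omega

lemma analytic_bound : ∀ᶠ x : ℝ in Filter.atTop,
    2 * ((Nat.primeCounting ⌊√x⌋₊ : ℝ) + 1) ≤ 14 * √(x / Real.log x) := by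
  have h := Real.tendsto_sqrt_atTop.eventually
    (Chebyshev.eventually_primeCounting_le (ε := 1) one_pos)
  filter_upwards [h, Filter.eventually_ge_atTop (Real.exp 1)] with x hx hx1
  have hx0 : 0 < x := lt_of_lt_of_le (Real.exp_pos 1) hx1
  have hL : 1 ≤ Real.log x := (Real.le_log_iff_exp_le hx0).2 hx1
  have h4 : Real.log 4 ≤ 2 := by
    have : (4 : ℝ) = 2 ^ 2 := by norm_num
    rw [this, Real.log_pow]
    have := Real.log_two_lt_d9
    push_cast
    linarith
  rw [Real.log_sqrt hx0.le] at hx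
  have hA : √x / Real.log x ≤ √(x / Real.log x) := by
    rw [Real.sqrt_div hx0.le]
    gcongr
    exact Real.sqrt_le_iff.2 ⟨by linarith, by nlinarith⟩
  have hB : 1 ≤ √(x / Real.log x) := by
    rw [Real.one_le_sqrt, le_div_iff₀ (by linarith)]
    linarith [Real.log_le_sub_one_of_pos hx0]
  have hC : (Real.log 4 + 1) * √x / (Real.log x / 2) = 2 * (Real.log 4 + 1) * (√x / Real.log x) := by
    field_simp
  have hD : 0 ≤ √x / Real.log x := by positivity
  rw [hC] at hx
  nlinarith

/-- There exist a constant `C > 0` and a natural number `N` such that for all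
`n ≥ N`, the Compact increment satisfies
`d_c(n) = c (n+1) - c n ≤ C * √(c n / log (c n))`. -/
theorem stmt_10 :
    ∃ C : ℝ, 0 < C ∧ ∃ N : ℕ, ∀ n : ℕ, N ≤ n →
      ((c (n + 1) - c n : ℕ) : ℝ) ≤ C * Real.sqrt ((c n : ℝ) / Real.log (c n)) := by
  obtain ⟨N, hN⟩ := Filter.eventually_atTop.1 (tendsto_natCast_atTop_atTop.eventually analytic_bound)
  refine ⟨14, by norm_num, N + 1, fun n hn => ?_⟩
  have h := hN (c n) (by have := le_c n; omega)
  rw [Real.nat_floor_real_sqrt_eq_nat_sqrt] at h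
  refine le_trans ?_ h
  rw [c_succ n (by omega), Nat.add_sub_cancel_left]
  exact_mod_cast (dCaux_bound n (c n)).2
end
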